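/- arXiv:1108.2464 — 4 statements merged into one kernel-verified Lean document; each statement's English description precedes it below -/
import Mathlib

section
/- Let A = (a_{ij}) be an m × n real matrix and let B = (b_{ij}) be the (m+1) × (n+1) matrix defined by b_{ij} = a_{ij} for i ≤ m, j ≤ n; b_{i,n+1} = −∑_{k=1}^n a_{ik} for i ≤ m; b_{m+1,j} = −∑_{ℓ=1}^m a_{ℓj} for j ≤ n; and b_{m+1,n+1} = ∑_{ℓ=1}^m ∑_{k=1}^n a_{ℓk}. Then ‖A‖_cut = (1/4) ‖B‖_{∞→1}. -/
/-- The cut norm of an `m × n` real matrix. -/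
noncomputable def cutNorm {m n : ℕ} (B : Matrix (Fin m) (Fin n) ℝ) : ℝ :=
  sSup {x : ℝ | ∃ (S : Finset (Fin m)) (T : Finset (Fin n)),
    x = |∑ i ∈ S, ∑ j ∈ T, B i j|}

/-- The `ℓ∞ → ℓ1` operator norm of an `m × n` real matrix. -/
noncomputable def normInftyToOne {m n : ℕ} (B : Matrix (Fin m) (Fin n) ℝ) : ℝ :=
  sSup {x : ℝ | ∃ (ε : Fin m → ℝ) (δ : Fin n → ℝ),
    (∀ i, ε i = 1 ∨ ε i = -1) ∧ (∀ j, δ j = 1 ∨ δ j = -1) ∧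
    x = ∑ i, ∑ j, B i j * ε i * δ j}

/-!
If all row and column sums of `B` vanish, then substituting `ε = 1 - 2 · 1_S` and `δ = 1 - 2 · 1_T`
turns `∑ i, ∑ j, B i j * ε i * δ j` into four times the sum of `B` over `S × T`, and complementing
`S` or `T` only changes the sign of that sum. The substitution gives `‖B‖_{∞→1} = 4 ‖B‖_cut`;
complementation lets us choose `S` and `T` so as to avoid the appended row and column, so
`‖B‖_cut = ‖A‖_cut`.
-/

/-- The `±1`-vector of a finite set `S`, equal to `-1` on `S` and to `1` off `S`. It identifies sign
vectors with finite sets. -/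
def signVector {ι : Type*} [DecidableEq ι] (S : Finset ι) (i : ι) : ℝ :=
  if i ∈ S then -1 else 1

lemma signVector_eq_one_or {ι : Type*} [DecidableEq ι] (S : Finset ι) (i : ι) :
    signVector S i = 1 ∨ signVector S i = -1 := by
  unfold signVector
  split_ifs <;> simp

lemma exists_signVector_eq {ι : Type*} [Finite ι] [DecidableEq ι] {ε : ι → ℝ}
    (hε : ∀ i, ε i = 1 ∨ ε i = -1) : ∃ S, signVector S = ε := by
  have := Fintype.ofFinite ι
  refine ⟨Finset.univ.filter fun i => ε i = -1, funext fun i => ?_⟩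
  rcases hε i with h | h <;> norm_num [signVector, h]

lemma sum_mul_signVector_of_sum_eq_zero {ι : Type*} [Fintype ι] [DecidableEq ι] {f : ι → ℝ}
    (hf : ∑ i, f i = 0) (S : Finset ι) :
    ∑ i, f i * signVector S i = -2 * ∑ i ∈ S, f i := by
  calc ∑ i, f i * signVector S i
      = ∑ i, (f i - 2 * if i ∈ S then f i else 0) :=
        Finset.sum_congr rfl fun i _ => by unfold signVector; split_ifs <;> ring
    _ = -2 * ∑ i ∈ S, f i := by
        rw [Finset.sum_sub_distrib, hf, ← Finset.mul_sum, Finset.sum_ite_mem, Finset.univ_inter]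
        ring

section ZeroSums

variable {ι κ : Type*}

lemma sum_sum_mul_signVector [Fintype ι] [Fintype κ] [DecidableEq ι] [DecidableEq κ]
    {B : Matrix ι κ ℝ} (hrow : ∀ i, ∑ j, B i j = 0) (hcol : ∀ j, ∑ i, B i j = 0)
    (S : Finset ι) (T : Finset κ) :
    ∑ i, ∑ j, B i j * signVector S i * signVector T j = 4 * ∑ i ∈ S, ∑ j ∈ T, B i j := by
  have sum_rows_eq_zero : ∑ i, ∑ j ∈ T, B i j = 0 :=
    Finset.sum_comm.trans (Finset.sum_eq_zero fun j _ => hcol j)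
  calc ∑ i, ∑ j, B i j * signVector S i * signVector T j
      = ∑ i, (∑ j, B i j * signVector T j) * signVector S i := by
        simp only [Finset.sum_mul, mul_right_comm]
    _ = -2 * ∑ i, (∑ j ∈ T, B i j) * signVector S i := by
        simp only [sum_mul_signVector_of_sum_eq_zero (hrow _), mul_assoc, ← Finset.mul_sum]
    _ = 4 * ∑ i ∈ S, ∑ j ∈ T, B i j := by
        rw [sum_mul_signVector_of_sum_eq_zero sum_rows_eq_zero]
        ring

variable {M : Type*} [AddCommGroup M] {B : Matrix ι κ M}

lemma sum_compl_sum_of_col_sum_eq_zero [Fintype ι] [DecidableEq ι] (hcol : ∀ j, ∑ i, B i j = 0)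
    (S : Finset ι) (T : Finset κ) :
    ∑ i ∈ Sᶜ, ∑ j ∈ T, B i j = -∑ i ∈ S, ∑ j ∈ T, B i j := by
  rw [eq_neg_iff_add_eq_zero, Finset.sum_compl_add_sum]
  exact Finset.sum_comm.trans (Finset.sum_eq_zero fun j _ => hcol j)

lemma sum_sum_compl_of_row_sum_eq_zero [Fintype κ] [DecidableEq κ] (hrow : ∀ i, ∑ j, B i j = 0)
    (S : Finset ι) (T : Finset κ) :
    ∑ i ∈ S, ∑ j ∈ Tᶜ, B i j = -∑ i ∈ S, ∑ j ∈ T, B i j := by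
  rw [← Finset.sum_neg_distrib]
  refine Finset.sum_congr rfl fun i _ => ?_
  rw [eq_neg_iff_add_eq_zero, Finset.sum_compl_add_sum, hrow]

lemma exists_notMem_abs_sum_sum_eq [Lattice M] [Fintype ι] [Fintype κ]
    (hrow : ∀ i, ∑ j, B i j = 0) (hcol : ∀ j, ∑ i, B i j = 0)
    (i₀ : ι) (j₀ : κ) (S : Finset ι) (T : Finset κ) :
    ∃ S' T', i₀ ∉ S' ∧ j₀ ∉ T' ∧ |∑ i ∈ S', ∑ j ∈ T', B i j| = |∑ i ∈ S, ∑ j ∈ T, B i j| := by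
  classical
  obtain ⟨S', hS', hS'_abs⟩ :
      ∃ S', i₀ ∉ S' ∧ |∑ i ∈ S', ∑ j ∈ T, B i j| = |∑ i ∈ S, ∑ j ∈ T, B i j| := by
    by_cases hi₀ : i₀ ∈ S
    · exact ⟨Sᶜ, by simpa, by rw [sum_compl_sum_of_col_sum_eq_zero hcol, abs_neg]⟩
    · exact ⟨S, hi₀, rfl⟩
  by_cases hj₀ : j₀ ∈ T
  · exact ⟨S', Tᶜ, hS', by simpa,
      by rw [sum_sum_compl_of_row_sum_eq_zero hrow, abs_neg, hS'_abs]⟩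
  · exact ⟨S', T, hS', hj₀, hS'_abs⟩

end ZeroSums

section Norms

variable {m n : ℕ}

lemma abs_sum_sum_le_cutNorm (B : Matrix (Fin m) (Fin n) ℝ) (S : Finset (Fin m))
    (T : Finset (Fin n)) : |∑ i ∈ S, ∑ j ∈ T, B i j| ≤ cutNorm B := by
  refine le_csSup (Set.Finite.bddAbove ?_) ⟨S, T, rfl⟩
  refine (Set.finite_range fun p : Finset (Fin m) × Finset (Fin n) =>
    |∑ i ∈ p.1, ∑ j ∈ p.2, B i j|).subset ?_
  rintro _ ⟨S, T, rfl⟩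
  exact ⟨(S, T), rfl⟩

lemma cutNorm_le {B : Matrix (Fin m) (Fin n) ℝ} {c : ℝ}
    (h : ∀ S T, |∑ i ∈ S, ∑ j ∈ T, B i j| ≤ c) : cutNorm B ≤ c := by
  refine csSup_le ⟨_, ∅, ∅, rfl⟩ ?_
  rintro _ ⟨S, T, rfl⟩
  exact h S T

lemma sum_sum_mul_signVector_le_normInftyToOne (B : Matrix (Fin m) (Fin n) ℝ)
    (S : Finset (Fin m)) (T : Finset (Fin n)) :
    ∑ i, ∑ j, B i j * signVector S i * signVector T j ≤ normInftyToOne B := by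
  refine le_csSup (Set.Finite.bddAbove ?_)
    ⟨_, _, signVector_eq_one_or S, signVector_eq_one_or T, rfl⟩
  refine (Set.finite_range fun p : Finset (Fin m) × Finset (Fin n) =>
    ∑ i, ∑ j, B i j * signVector p.1 i * signVector p.2 j).subset ?_
  rintro _ ⟨ε, δ, hε, hδ, rfl⟩
  obtain ⟨S, rfl⟩ := exists_signVector_eq hε
  obtain ⟨T, rfl⟩ := exists_signVector_eq hδ
  exact ⟨(S, T), rfl⟩

lemma normInftyToOne_le {B : Matrix (Fin m) (Fin n) ℝ} {c : ℝ}
    (h : ∀ S T, ∑ i, ∑ j, B i j * signVector S i * signVector T j ≤ c) :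
    normInftyToOne B ≤ c := by
  refine csSup_le ⟨_, 1, 1, fun _ => .inl rfl, fun _ => .inl rfl, rfl⟩ ?_
  rintro _ ⟨ε, δ, hε, hδ, rfl⟩
  obtain ⟨S, rfl⟩ := exists_signVector_eq hε
  obtain ⟨T, rfl⟩ := exists_signVector_eq hδ
  exact h S T

lemma normInftyToOne_eq_four_mul_cutNorm {B : Matrix (Fin m) (Fin n) ℝ}
    (hrow : ∀ i, ∑ j, B i j = 0) (hcol : ∀ j, ∑ i, B i j = 0) :
    normInftyToOne B = 4 * cutNorm B := by
  refine le_antisymm (normInftyToOne_le fun S T => ?_) ?_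
  · rw [sum_sum_mul_signVector hrow hcol]
    linarith [le_abs_self (∑ i ∈ S, ∑ j ∈ T, B i j), abs_sum_sum_le_cutNorm B S T]
  · have four_mul_sum_le (S T) : 4 * ∑ i ∈ S, ∑ j ∈ T, B i j ≤ normInftyToOne B :=
      sum_sum_mul_signVector hrow hcol S T ▸ sum_sum_mul_signVector_le_normInftyToOne B S T
    suffices cutNorm B ≤ normInftyToOne B / 4 by linarith
    refine cutNorm_le fun S T => abs_le'.2 ⟨by linarith [four_mul_sum_le S T], ?_⟩
    rw [← sum_compl_sum_of_col_sum_eq_zero hcol]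
    linarith [four_mul_sum_le Sᶜ T]

lemma cutNorm_submatrix_le {m' n' : ℕ} (B : Matrix (Fin m) (Fin n) ℝ)
    (f : Fin m' ↪ Fin m) (g : Fin n' ↪ Fin n) : cutNorm (B.submatrix f g) ≤ cutNorm B :=
  cutNorm_le fun S T => by
    simpa only [Finset.sum_map, Matrix.submatrix_apply] using
      abs_sum_sum_le_cutNorm B (S.map f) (T.map g)

lemma sum_preimage_succAbove {M : Type*} [AddCommMonoid M] {i₀ : Fin (m + 1)}
    {S : Finset (Fin (m + 1))} (hi₀ : i₀ ∉ S) (f : Fin (m + 1) → M) :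
    ∑ i ∈ S.preimage i₀.succAbove Fin.succAbove_right_injective.injOn, f (i₀.succAbove i) =
      ∑ i ∈ S, f i :=
  Finset.sum_preimage _ _ _ _ fun _ hi hi_range =>
    absurd (Fin.exists_succAbove_eq (ne_of_mem_of_not_mem hi hi₀)) hi_range

lemma cutNorm_submatrix_succAbove {B : Matrix (Fin (m + 1)) (Fin (n + 1)) ℝ}
    (hrow : ∀ i, ∑ j, B i j = 0) (hcol : ∀ j, ∑ i, B i j = 0)
    (i₀ : Fin (m + 1)) (j₀ : Fin (n + 1)) :
    cutNorm (B.submatrix i₀.succAbove j₀.succAbove) = cutNorm B := by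
  refine le_antisymm (cutNorm_submatrix_le B i₀.succAboveEmb j₀.succAboveEmb)
    (cutNorm_le fun S T => ?_)
  obtain ⟨S', T', hi₀, hj₀, h_abs⟩ := exists_notMem_abs_sum_sum_eq hrow hcol i₀ j₀ S T
  rw [← h_abs, ← sum_preimage_succAbove hi₀]
  simp only [← sum_preimage_succAbove hj₀]
  exact abs_sum_sum_le_cutNorm (B.submatrix i₀.succAbove j₀.succAbove) _ _

end Norms

/-- If `B` is the `(m+1) × (n+1)` matrix obtained from `A` by appending one row and one
column making all row and column sums of `B` vanish, then `‖A‖_cut = (1/4)‖B‖_{∞→1}`. -/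
theorem cutNorm_eq_quarter_normInftyToOne {m n : ℕ}
    (A : Matrix (Fin m) (Fin n) ℝ) (B : Matrix (Fin (m + 1)) (Fin (n + 1)) ℝ)
    (hB₁ : ∀ (i : Fin m) (j : Fin n), B i.castSucc j.castSucc = A i j)
    (hB₂ : ∀ i : Fin m, B i.castSucc (Fin.last n) = -∑ k, A i k)
    (hB₃ : ∀ j : Fin n, B (Fin.last m) j.castSucc = -∑ l, A l j)
    (hB₄ : B (Fin.last m) (Fin.last n) = ∑ l, ∑ k, A l k) :
    cutNorm A = (1 / 4) * normInftyToOne B := by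
  have hrow (i) : ∑ j, B i j = 0 := by
    induction i using Fin.lastCases with
    | last =>
      simp only [Fin.sum_univ_castSucc, hB₃, hB₄, Finset.sum_neg_distrib]
      exact neg_add_eq_zero.2 Finset.sum_comm
    | cast i => simp only [Fin.sum_univ_castSucc, hB₁, hB₂, add_neg_cancel]
  have hcol (j) : ∑ i, B i j = 0 := by
    induction j using Fin.lastCases with
    | last => simp only [Fin.sum_univ_castSucc, hB₂, hB₄, Finset.sum_neg_distrib, neg_add_cancel]
    | cast j => simp only [Fin.sum_univ_castSucc, hB₁, hB₃, add_neg_cancel]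
  have hA : B.submatrix (Fin.last m).succAbove (Fin.last n).succAbove = A := by
    ext i j
    simp only [Matrix.submatrix_apply, Fin.succAbove_last, hB₁]
  rw [normInftyToOne_eq_four_mul_cutNorm hrow hcol,
    ← cutNorm_submatrix_succAbove hrow hcol (Fin.last m) (Fin.last n), hA]
  ring
end

section
/- For every ε ∈ (0,1) and every m × n real matrix A = (a_{ij}) with |a_{ij}| ≤ 1 for all i, j, there exist an integer s ≤ ⌈1/ε²⌉ and cut matrices D_1, …, D_s such that ‖A − ∑_{k=1}^s D_k‖_cut ≤ ε m n. -/
/-- A matrix is a cut matrix if it is constant on some block `S × T` and zero elsewhere. -/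
def IsCutMatrix {m n : ℕ} (D : Matrix (Fin m) (Fin n) ℝ) : Prop :=
  ∃ (S : Finset (Fin m)) (T : Finset (Fin n)) (d : ℝ),
    ∀ i j, D i j = if i ∈ S ∧ j ∈ T then d else 0

/-!
Call the sum of the squared entries of a matrix its energy. If the block `S × T` witnesses
`‖B‖_cut = |x|` with `x = ∑_{S × T} B`, then subtracting the constant `x / (m n)` on that block
lowers the energy by at least `x² / (m n)`. As long as the cut norm exceeds `ε m n`, each such step
therefore costs more than `ε² m n` of energy, and a matrix with entries in `[-1, 1]` has only `m n`
to spend.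
-/

section Energy

variable {ι κ : Type*} [Fintype ι] [Fintype κ]

theorem sum_sub_ite_mem_sq [DecidableEq ι] (f : ι → ℝ) (s : Finset ι) (d : ℝ) :
    ∑ a, (f a - if a ∈ s then d else 0) ^ 2 =
      ∑ a, f a ^ 2 - (2 * d * ∑ a ∈ s, f a - s.card * d ^ 2) := by
  have expand_term (a : ι) : (f a - if a ∈ s then d else 0) ^ 2 =
      f a ^ 2 - if a ∈ s then 2 * d * f a - d ^ 2 else 0 := by
    split_ifs <;> ring
  simp only [expand_term, Finset.sum_sub_distrib, Finset.sum_ite_mem, Finset.univ_inter,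
    Finset.mul_sum, Finset.sum_const, nsmul_eq_mul]

-- Dividing by the size of the whole index type rather than that of `s` still gives the bound, and
-- leaves `s = ∅` unexceptional.
theorem sq_sum_le_card_mul_sum_sq_sub [DecidableEq ι] (f : ι → ℝ) (s : Finset ι) :
    (∑ a ∈ s, f a) ^ 2 ≤ Fintype.card ι *
      (∑ a, f a ^ 2 -
        ∑ a, (f a - if a ∈ s then (∑ b ∈ s, f b) / Fintype.card ι else 0) ^ 2) := by
  rw [sum_sub_ite_mem_sq, sub_sub_cancel]
  cases isEmpty_or_nonempty ι
  · simp [s.eq_empty_of_isEmpty]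
  set x := ∑ a ∈ s, f a
  set N := (Fintype.card ι : ℝ)
  have hN : N ≠ 0 := Nat.cast_ne_zero.mpr Fintype.card_ne_zero
  calc x ^ 2 = N * (2 * (x / N) * x - N * (x / N) ^ 2) := by field_simp; ring
    _ ≤ N * (2 * (x / N) * x - s.card * (x / N) ^ 2) := by
        gcongr
        exact Nat.cast_le.mpr s.card_le_univ

/-- The energy of a real matrix: the sum of the squares of its entries, i.e. its squared Frobenius
norm. It is the potential that decreases along the Frieze–Kannan iteration. -/
def energy (B : Matrix ι κ ℝ) : ℝ :=
  ∑ i, ∑ j, B i j ^ 2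

theorem energy_nonneg (B : Matrix ι κ ℝ) : 0 ≤ energy B := by
  unfold energy
  positivity

theorem energy_le_of_abs_le_one {B : Matrix ι κ ℝ} (hB : ∀ i j, |B i j| ≤ 1) :
    energy B ≤ Fintype.card ι * Fintype.card κ :=
  calc energy B ≤ ∑ _i : ι, ∑ _j : κ, (1 : ℝ) := by
        unfold energy
        gcongr with i _ j _
        exact (sq_le_one_iff_abs_le_one _).mpr (hB i j)
    _ = Fintype.card ι * Fintype.card κ := by simp

end Energy

section CutNorm

variable {m n : ℕ}

theorem exists_cutNorm_eq_abs_sum (B : Matrix (Fin m) (Fin n) ℝ) :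
    ∃ (S : Finset (Fin m)) (T : Finset (Fin n)), cutNorm B = |∑ i ∈ S, ∑ j ∈ T, B i j| := by
  let blockSums : Set ℝ := {x | ∃ (S : Finset (Fin m)) (T : Finset (Fin n)),
    x = |∑ i ∈ S, ∑ j ∈ T, B i j|}
  have hfinite : blockSums.Finite := by
    refine (Set.finite_range fun P : Finset (Fin m) × Finset (Fin n) ↦
      |∑ i ∈ P.1, ∑ j ∈ P.2, B i j|).subset ?_
    rintro _ ⟨S, T, rfl⟩
    exact ⟨(S, T), rfl⟩
  have hnonempty : blockSums.Nonempty := ⟨_, ∅, ∅, rfl⟩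
  exact hnonempty.csSup_mem hfinite

theorem exists_isCutMatrix_sq_cutNorm_le (B : Matrix (Fin m) (Fin n) ℝ) :
    ∃ D, IsCutMatrix D ∧ cutNorm B ^ 2 ≤ m * n * (energy B - energy (B - D)) := by
  obtain ⟨S, T, hST⟩ := exists_cutNorm_eq_abs_sum B
  let d := (∑ i ∈ S, ∑ j ∈ T, B i j) / (m * n)
  refine ⟨.of fun i j ↦ if i ∈ S ∧ j ∈ T then d else 0, ⟨S, T, d, fun _ _ ↦ rfl⟩, ?_⟩
  rw [hST, sq_abs]
  simpa [energy, d, Finset.sum_product, Fintype.sum_prod_type] using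
    sq_sum_le_card_mul_sum_sq_sub (fun p ↦ B p.1 p.2) (S ×ˢ T)

theorem exists_isCutMatrix_energy_sub_add_lt {ε : ℝ} (hε : 0 ≤ ε) {B : Matrix (Fin m) (Fin n) ℝ}
    (hB : ε * m * n < cutNorm B) :
    ∃ D, IsCutMatrix D ∧ energy (B - D) + ε ^ 2 * (m * n) < energy B := by
  obtain ⟨D, hD, hdrop⟩ := exists_isCutMatrix_sq_cutNorm_le B
  refine ⟨D, hD, lt_sub_iff_add_lt'.mp (lt_of_mul_lt_mul_left ?_ (by positivity : 0 ≤ (m * n : ℝ)))⟩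
  calc (m * n : ℝ) * (ε ^ 2 * (m * n)) = (ε * m * n) ^ 2 := by ring
    _ < cutNorm B ^ 2 := by gcongr
    _ ≤ m * n * (energy B - energy (B - D)) := hdrop

theorem exists_cutNorm_sub_sum_le_of_energy_le {ε : ℝ} (hε : 0 ≤ ε) (k : ℕ)
    (B : Matrix (Fin m) (Fin n) ℝ) (hB : energy B ≤ k * (ε ^ 2 * (m * n))) :
    ∃ s : ℕ, s ≤ k ∧ ∃ D : Fin s → Matrix (Fin m) (Fin n) ℝ,
      (∀ l, IsCutMatrix (D l)) ∧ cutNorm (B - ∑ l, D l) ≤ ε * m * n := by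
  induction k generalizing B with
  | zero =>
    refine ⟨0, le_rfl, Fin.elim0, fun l ↦ l.elim0, ?_⟩
    by_contra! hlarge
    obtain ⟨D, -, hdrop⟩ := exists_isCutMatrix_energy_sub_add_lt hε (B := B) (by simpa using hlarge)
    have hD : 0 ≤ energy (B - D) + ε ^ 2 * (m * n) := add_nonneg (energy_nonneg _) (by positivity)
    have hB_nonpos : energy B ≤ 0 := by simpa using hB
    linarith
  | succ k ih =>
    rcases le_or_gt (cutNorm B) (ε * m * n) with hsmall | hlarge
    · exact ⟨0, Nat.zero_le _, Fin.elim0, fun l ↦ l.elim0, by simpa using hsmall⟩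
    obtain ⟨D₀, hD₀, hdrop⟩ := exists_isCutMatrix_energy_sub_add_lt hε hlarge
    have henergy : energy (B - D₀) ≤ k * (ε ^ 2 * (m * n)) := by
      push_cast at hB
      linarith
    obtain ⟨s, hs, D, hD, hcut⟩ := ih (B - D₀) henergy
    refine ⟨s + 1, Nat.succ_le_succ hs, Fin.cons D₀ D, Fin.cases hD₀ hD, ?_⟩
    rwa [Fin.sum_cons, ← sub_sub]

theorem friezeKannan_decomposition_general {ε C : ℝ} (hε : 0 < ε) (A : Matrix (Fin m) (Fin n) ℝ)
    (hA : energy A ≤ C * (m * n)) :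
    ∃ s : ℕ, s ≤ ⌈C / ε ^ 2⌉₊ ∧
      ∃ D : Fin s → Matrix (Fin m) (Fin n) ℝ,
        (∀ k, IsCutMatrix (D k)) ∧ cutNorm (A - ∑ k, D k) ≤ ε * m * n := by
  refine exists_cutNorm_sub_sum_le_of_energy_le hε.le _ A ?_
  have hC : C ≤ ⌈C / ε ^ 2⌉₊ * ε ^ 2 := (div_le_iff₀ (by positivity)).mp (Nat.le_ceil _)
  calc energy A ≤ C * (m * n) := hA
    _ ≤ ⌈C / ε ^ 2⌉₊ * ε ^ 2 * (m * n) := by gcongr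
    _ = ⌈C / ε ^ 2⌉₊ * (ε ^ 2 * (m * n)) := mul_assoc _ _ _

end CutNorm

/-- Frieze–Kannan decomposition: every matrix with entries bounded by `1` is within cut
norm `ε m n` of a sum of at most `⌈1/ε²⌉` cut matrices. -/
theorem friezeKannan_decomposition {m n : ℕ} (ε : ℝ) (hε : ε ∈ Set.Ioo (0 : ℝ) 1)
    (A : Matrix (Fin m) (Fin n) ℝ) (hA : ∀ i j, |A i j| ≤ 1) :
    ∃ s : ℕ, s ≤ ⌈1 / ε ^ 2⌉₊ ∧
      ∃ D : Fin s → Matrix (Fin m) (Fin n) ℝ,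
        (∀ k, IsCutMatrix (D k)) ∧ cutNorm (A - ∑ k, D k) ≤ ε * m * n :=
  friezeKannan_decomposition_general hε.1 A (by simpa using energy_le_of_abs_le_one hA)
end

section
/- Let W be a skew-symmetric n × n real matrix (i.e., W(u,v) = −W(v,u) for all u, v) and let S, T ⊆ {1,…,n} be disjoint. Then there exist permutations σ¹ and σ² of {1,…,n} such that W(σ¹) + W(σ²) = 2 ∑_{u∈S, v∈T} W(u,v), where W(σ) = ∑_{1 ≤ u < v ≤ n} W(σ(u), σ(v)). -/
/-- `permVal W σ = ∑_{u < v} W (σ u) (σ v)`: the sum of the entries of `W` lying above the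
diagonal after permuting rows and columns by `σ`. -/
def permVal {n : ℕ} (W : Matrix (Fin n) (Fin n) ℝ) (σ : Equiv.Perm (Fin n)) : ℝ :=
  ∑ p ∈ Finset.univ.filter (fun p : Fin n × Fin n => p.1 < p.2), W (σ p.1) (σ p.2)

/-!
Reversing an order negates `W(σ)` when `W` is skew-symmetric, so it suffices to find two orders
whose values differ by `2 ∑_{u ∈ S, v ∈ T} W(u, v)`. Listing `S`, then `T`, then the rest, and
listing `T`, then `S`, then the rest, with the same order inside each block, are two orders that
disagree exactly on the pairs in `S × T`. If `S` and `T` overlap, `S ∩ T` is placed between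
`S \ T` and `T \ S` in both.
-/

open Finset Equiv

section OrderValue

variable {n : ℕ} {M : Type*}

/-- The value `W(σ) = ∑_{u < v} W (σ u) (σ v)` of the order `σ 0, σ 1, …` for weights `W`
in any additive commutative monoid; over `ℝ` it is `permVal` by definition. -/
def orderValue [AddCommMonoid M] (W : Fin n → Fin n → M) (σ : Perm (Fin n)) : M :=
  ∑ p : Fin n × Fin n with p.1 < p.2, W (σ p.1) (σ p.2)

/-- The rank of `u` in the block order `S \ T`, `S ∩ T`, `T \ S`, `(S ∪ T)ᶜ`. Exchanging `S` and `T`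
swaps the first block with the third. -/
def blockRank {α : Type*} [DecidableEq α] (S T : Finset α) (u : α) : ℕ :=
  if u ∈ S then (if u ∈ T then 1 else 0) else (if u ∈ T then 2 else 3)

lemma orderValue_eq_sum_ite [AddCommMonoid M] (W : Fin n → Fin n → M) (σ : Perm (Fin n)) :
    orderValue W σ = ∑ u, ∑ v, if σ.symm u < σ.symm v then W u v else 0 := by
  rw [orderValue, sum_filter, Fintype.sum_prod_type, ← Equiv.sum_comp σ.symm]
  refine sum_congr rfl fun u _ ↦ ?_
  rw [← Equiv.sum_comp σ.symm]
  simp only [apply_symm_apply]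

lemma sum_sum_eq_neg_of_skew {α : Type*} [AddCommGroup M] {W : α → α → M}
    (hW : ∀ u v, W u v = -W v u) (S T : Finset α) :
    ∑ u ∈ T, ∑ v ∈ S, W u v = -∑ u ∈ S, ∑ v ∈ T, W u v := by
  rw [sum_comm]
  simp only [← sum_neg_distrib, ← hW]

lemma orderValue_revPerm_trans [AddCommGroup M] {W : Fin n → Fin n → M}
    (hW : ∀ u v, W u v = -W v u) (σ : Perm (Fin n)) :
    orderValue W (Fin.revPerm.trans σ) = -orderValue W σ :=
  calc orderValue W (Fin.revPerm.trans σ)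
      = ∑ u, ∑ v, if σ.symm v < σ.symm u then W u v else 0 := by
        simp [orderValue_eq_sum_ite]
    _ = ∑ u, ∑ v, if σ.symm u < σ.symm v then -W u v else 0 := by
        rw [sum_comm]
        simp only [← hW]
    _ = -orderValue W σ := by
        simp only [orderValue_eq_sum_ite, ← sum_neg_distrib, neg_ite, neg_zero]

lemma sort_symm_lt_sort_symm_iff {α : Type*} [LinearOrder α] (f : Fin n → α) (u v : Fin n) :
    (Tuple.sort f).symm u < (Tuple.sort f).symm v ↔ f u < f v ∨ f u = f v ∧ u < v := by
  obtain ⟨hmono, hstable⟩ := Tuple.eq_sort_iff.mp (rfl : Tuple.sort f = Tuple.sort f)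
  have hlex : StrictMono fun i ↦ toLex (f (Tuple.sort f i), Tuple.sort f i) := fun i j hij ↦
    Prod.Lex.toLex_lt_toLex.mpr <|
      (hmono hij.le).lt_or_eq.imp_right fun heq ↦ ⟨heq, hstable i j hij heq⟩
  rw [← hlex.lt_iff_lt, Prod.Lex.toLex_lt_toLex]
  simp only [apply_symm_apply]

lemma ite_blockRank_lex_sub_swap {α : Type*} [DecidableEq α] [AddCommGroup M] (S T : Finset α)
    (u v : α) (tie : Prop) [Decidable tie] (w : M) :
    (if blockRank S T u < blockRank S T v ∨ blockRank S T u = blockRank S T v ∧ tie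
        then w else 0) -
      (if blockRank T S u < blockRank T S v ∨ blockRank T S u = blockRank T S v ∧ tie
        then w else 0) =
      (if u ∈ S ∧ v ∈ T then w else 0) - (if u ∈ T ∧ v ∈ S then w else 0) := by
  by_cases huS : u ∈ S <;> by_cases huT : u ∈ T <;> by_cases hvS : v ∈ S <;>
    by_cases hvT : v ∈ T <;> simp [blockRank, huS, huT, hvS, hvT]

lemma orderValue_sort_blockRank_sub_swap [AddCommGroup M] (W : Fin n → Fin n → M)
    (S T : Finset (Fin n)) :
    orderValue W (Tuple.sort (blockRank S T)) - orderValue W (Tuple.sort (blockRank T S)) =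
      ∑ u ∈ S, ∑ v ∈ T, W u v - ∑ u ∈ T, ∑ v ∈ S, W u v := by
  have block_sum (A B : Finset (Fin n)) :
      ∑ u ∈ A, ∑ v ∈ B, W u v = ∑ u, ∑ v, if u ∈ A ∧ v ∈ B then W u v else 0 := by
    simp [ite_and, sum_ite_mem]
  simp only [orderValue_eq_sum_ite, sort_symm_lt_sort_symm_iff, block_sum, ← sum_sub_distrib,
    ite_blockRank_lex_sub_swap]

theorem exists_two_perms_sum_eq_twice_block_sum_general [AddCommGroup M]
    (W : Fin n → Fin n → M) (hW : ∀ u v, W u v = -W v u) (S T : Finset (Fin n)) :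
    ∃ σ τ : Perm (Fin n),
      orderValue W σ + orderValue W τ = 2 • ∑ u ∈ S, ∑ v ∈ T, W u v := by
  refine ⟨Tuple.sort (blockRank S T), Fin.revPerm.trans (Tuple.sort (blockRank T S)), ?_⟩
  rw [orderValue_revPerm_trans hW, ← sub_eq_add_neg, orderValue_sort_blockRank_sub_swap,
    sum_sum_eq_neg_of_skew hW S T, sub_neg_eq_add, two_nsmul]

end OrderValue

/-- For a skew-symmetric matrix `W` and disjoint `S, T ⊆ {1,…,n}`, there exist two
permutations whose objective values sum to twice the `S × T` block sum of `W`. -/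
theorem exists_two_perms_sum_eq_twice_block_sum {n : ℕ} (W : Matrix (Fin n) (Fin n) ℝ)
    (hW : ∀ u v, W u v = -W v u) (S T : Finset (Fin n)) (hST : Disjoint S T) :
    ∃ σ τ : Equiv.Perm (Fin n),
      permVal W σ + permVal W τ = 2 * ∑ u ∈ S, ∑ v ∈ T, W u v := by
  simpa only [orderValue, permVal, two_nsmul, ← two_mul] using
    exists_two_perms_sum_eq_twice_block_sum_general W hW S T
end

section
/- Let A = (a_{ij}) be an n × n real matrix whose diagonal entries vanish, let m ≥ 1 be an integer, and let M₁(A) = max{∑_{i=1}^n ∑_{j=1}^n a_{ij} t_i t_j : t ∈ ℝⁿ, ∑_{k=1}^n |t_k| ≤ 1}. Then there exists y ∈ ℝⁿ such that m·y_i ∈ ℤ for every i, ∑_{i=1}^n |y_i| ≤ 1, and ∑_{i=1}^n ∑_{j=1}^n a_{ij} y_i y_j ≥ (1 − 1/m) · M₁(A). -/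
/-!
The `ℓ₁` unit ball is the convex hull of `S = {0} ∪ {±eᵢ}`, and the quadratic form `Q` of `A` is
nonnegative on `S`. If `t` is the mean of a random `v ∈ S`, the expectation of `Q (w + v)` is at
least `Q w + polar Q w t = Q (w + t) - Q t`. Hence the `m` copies of `t` in `m • t` can be replaced
one at a time by points of `S`, at a cost of at most `Q t` each. The resulting integer vector `u`
satisfies `Q u ≥ m ^ 2 * Q t - m * Q t`, and `y = u / m` does the job for a maximizer `t`.
-/

open Finset

section QuadraticForm

variable {𝕜 V : Type*} [Field 𝕜] [LinearOrder 𝕜] [IsStrictOrderedRing 𝕜] [AddCommGroup V]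
  [Module 𝕜 V] {Q : QuadraticForm 𝕜 V} {S : Set V} {t : V}

lemma exists_mem_map_add_ge_of_mem_convexHull (hQ : ∀ v ∈ S, 0 ≤ Q v)
    (ht : t ∈ convexHull 𝕜 S) (w : V) : ∃ v ∈ S, Q (w + t) - Q t ≤ Q (w + v) := by
  obtain ⟨v, hv, hpolar⟩ := ((Q.polarBilin w).convexOn convex_univ).exists_ge_of_mem_convexHull
    (Set.subset_univ S) ht
  refine ⟨v, hv, ?_⟩
  rw [QuadraticMap.polarBilin_apply_apply, QuadraticMap.polarBilin_apply_apply] at hpolar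
  rw [QuadraticMap.map_add Q w t, QuadraticMap.map_add Q w v]
  linarith [hQ v hv]

lemma exists_map_add_sum_ge_of_mem_convexHull (hQ : ∀ v ∈ S, 0 ≤ Q v)
    (ht : t ∈ convexHull 𝕜 S) (k : ℕ) (w : V) :
    ∃ v : Fin k → V, (∀ i, v i ∈ S) ∧ Q (w + k • t) - k * Q t ≤ Q (w + ∑ i, v i) := by
  induction k generalizing w with
  | zero => exact ⟨Fin.elim0, fun i => i.elim0, by simp⟩
  | succ k ih =>
    obtain ⟨v₀, hv₀, hstep⟩ := exists_mem_map_add_ge_of_mem_convexHull hQ ht (w + k • t)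
    obtain ⟨v, hv, hsum⟩ := ih (w + v₀)
    refine ⟨Fin.cons v₀ v, Fin.cases hv₀ hv, ?_⟩
    calc Q (w + (k + 1) • t) - (k + 1 : ℕ) * Q t
        = Q (w + k • t + t) - Q t - k * Q t := by
          rw [succ_nsmul, ← add_assoc]; push_cast; ring
      _ ≤ Q (w + k • t + v₀) - k * Q t := by gcongr
      _ = Q (w + v₀ + k • t) - k * Q t := by rw [add_right_comm]
      _ ≤ Q (w + v₀ + ∑ i, v i) := hsum
      _ = Q (w + ∑ i, (Fin.cons v₀ v : Fin (k + 1) → V) i) := by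
          rw [Fin.sum_cons, add_assoc]

lemma exists_map_inv_smul_sum_ge_of_mem_convexHull (hQ : ∀ v ∈ S, 0 ≤ Q v)
    (ht : t ∈ convexHull 𝕜 S) {k : ℕ} (hk : k ≠ 0) :
    ∃ v : Fin k → V, (∀ i, v i ∈ S) ∧ (1 - 1 / k) * Q t ≤ Q ((k : 𝕜)⁻¹ • ∑ i, v i) := by
  obtain ⟨v, hv, hsum⟩ := exists_map_add_sum_ge_of_mem_convexHull hQ ht k 0
  refine ⟨v, hv, ?_⟩
  rw [zero_add, zero_add, ← Nat.cast_smul_eq_nsmul 𝕜, QuadraticMap.map_smul, smul_eq_mul] at hsum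
  have hk' : (k : 𝕜) ≠ 0 := Nat.cast_ne_zero.mpr hk
  calc (1 - 1 / k) * Q t = (k : 𝕜)⁻¹ * (k : 𝕜)⁻¹ * (k * k * Q t - k * Q t) := by field_simp
    _ ≤ (k : 𝕜)⁻¹ * (k : 𝕜)⁻¹ * Q (∑ i, v i) := by gcongr
    _ = Q ((k : 𝕜)⁻¹ • ∑ i, v i) := by rw [QuadraticMap.map_smul, smul_eq_mul]

end QuadraticForm

lemma sum_smul_mem_of_convex_of_zero_mem {𝕜 V ι : Type*} [Field 𝕜] [LinearOrder 𝕜]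
    [IsStrictOrderedRing 𝕜] [AddCommGroup V] [Module 𝕜 V] [Fintype ι] {C : Set V}
    (hC : Convex 𝕜 C) (h₀ : 0 ∈ C) {c : ι → 𝕜} {v : ι → V} (hc : ∀ i, 0 ≤ c i)
    (hc₁ : ∑ i, c i ≤ 1) (hv : ∀ i, v i ∈ C) : ∑ i, c i • v i ∈ C := by
  have hmem : ∑ o : Option ι, o.elim (1 - ∑ i, c i) c • o.elim 0 v ∈ C :=
    hC.sum_mem (fun o _ => by cases o <;> simp [hc, hc₁]) (by simp [Fintype.sum_option])
      (fun o _ => by cases o <;> simp [h₀, hv])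
  simpa [Fintype.sum_option] using hmem

section SumAbs

variable {𝕜 ι : Type*} [Ring 𝕜] [LinearOrder 𝕜] [IsStrictOrderedRing 𝕜] [Fintype ι]

lemma convex_sum_abs_le (r : 𝕜) : Convex 𝕜 {t : ι → 𝕜 | ∑ i, |t i| ≤ r} := by
  intro x hx y hy a b ha hb hab
  calc ∑ i, |a * x i + b * y i|
      ≤ ∑ i, (a * |x i| + b * |y i|) := sum_le_sum fun i _ => by
        simpa only [abs_mul, abs_of_nonneg ha, abs_of_nonneg hb] using
          abs_add_le (a * x i) (b * y i)
    _ = a * ∑ i, |x i| + b * ∑ i, |y i| := by rw [sum_add_distrib, mul_sum, mul_sum]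
    _ ≤ a * r + b * r := by gcongr <;> assumption
    _ = r := by rw [← add_mul, hab, one_mul]

lemma sum_abs_sum_le_card {κ : Type*} [Fintype κ] {v : κ → ι → 𝕜} (hv : ∀ j, ∑ i, |v j i| ≤ 1) :
    ∑ i, |(∑ j, v j) i| ≤ Fintype.card κ :=
  calc ∑ i, |(∑ j, v j) i| ≤ ∑ i, ∑ j, |v j i| := sum_le_sum fun i _ => by
        simpa only [Finset.sum_apply] using abs_sum_le_sum_abs (fun j => v j i) univ
    _ = ∑ j, ∑ i, |v j i| := sum_comm
    _ ≤ ∑ _j : κ, 1 := sum_le_sum fun j _ => hv j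
    _ = Fintype.card κ := by simp

end SumAbs

section SignedUnitVectors

variable {𝕜 ι : Type*} [Ring 𝕜] [DecidableEq ι]

variable (𝕜 ι) in
/-- The vectors `eᵢ` and `-eᵢ` of the standard basis together with `0`, i.e. the vertices and the
centre of the cross-polytope. The origin is inserted explicitly so that it is present also when `ι`
is empty. -/
def signedUnitVectors : Set (ι → 𝕜) :=
  insert 0 (Set.range fun p : ι × SignType => Pi.single p.1 (p.2 : 𝕜))

lemma finite_signedUnitVectors [Finite ι] : (signedUnitVectors 𝕜 ι).Finite :=
  (Set.finite_range _).insert 0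

lemma exists_intCast_eq_of_mem_signedUnitVectors {v : ι → 𝕜} (hv : v ∈ signedUnitVectors 𝕜 ι) :
    ∃ z : ι → ℤ, ∀ i, v i = z i := by
  obtain rfl | ⟨⟨j, ε⟩, rfl⟩ := hv
  · exact ⟨0, by simp⟩
  · exact ⟨Pi.single j ε, fun i => by obtain rfl | hij := eq_or_ne i j <;> simp [*]⟩

variable [LinearOrder 𝕜] [IsStrictOrderedRing 𝕜] [Fintype ι]

lemma sum_abs_le_one_of_mem_signedUnitVectors {v : ι → 𝕜} (hv : v ∈ signedUnitVectors 𝕜 ι) :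
    ∑ i, |v i| ≤ 1 := by
  obtain rfl | ⟨⟨j, ε⟩, rfl⟩ := hv
  · simp
  · cases ε <;> simp [Pi.single_apply, apply_ite abs]

end SignedUnitVectors

lemma convexHull_signedUnitVectors {𝕜 ι : Type*} [Field 𝕜] [LinearOrder 𝕜] [IsStrictOrderedRing 𝕜]
    [Fintype ι] [DecidableEq ι] :
    convexHull 𝕜 (signedUnitVectors 𝕜 ι) = {t | ∑ i, |t i| ≤ 1} := by
  refine (convexHull_min (fun v => sum_abs_le_one_of_mem_signedUnitVectors)
    (convex_sum_abs_le 1)).antisymm fun t ht => ?_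
  have hdecomp : t = ∑ i, |t i| • Pi.single i (SignType.sign (t i) : 𝕜) := by
    simp_rw [← Pi.single_smul, smul_eq_mul, abs_mul_sign]
    exact (univ_sum_single t).symm
  rw [hdecomp]
  exact sum_smul_mem_of_convex_of_zero_mem (convex_convexHull 𝕜 _)
    (subset_convexHull 𝕜 _ (Set.mem_insert _ _)) (fun i => abs_nonneg (t i)) ht
    fun i => subset_convexHull 𝕜 _ (Set.mem_insert_of_mem _ ⟨(i, SignType.sign (t i)), rfl⟩)

lemma isCompact_sum_abs_le_one {ι : Type*} [Fintype ι] :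
    IsCompact {t : ι → ℝ | ∑ i, |t i| ≤ 1} := by
  classical
  rw [← convexHull_signedUnitVectors]
  exact finite_signedUnitVectors.isCompact_convexHull ℝ

section Matrix

variable {𝕜 ι : Type*} [CommRing 𝕜] [Fintype ι] [DecidableEq ι]

lemma toQuadraticForm'_apply_eq_sum (A : Matrix ι ι 𝕜) (t : ι → 𝕜) :
    A.toQuadraticForm' t = ∑ i, ∑ j, A i j * t i * t j := by
  simp only [Matrix.toQuadraticForm', LinearMap.BilinMap.toQuadraticMap_apply,
    Matrix.toLinearMap₂'_apply, smul_eq_mul]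
  exact sum_congr rfl fun i _ => sum_congr rfl fun j _ => by ring

variable [LinearOrder 𝕜] [IsStrictOrderedRing 𝕜] {A : Matrix ι ι 𝕜}

lemma toQuadraticForm'_nonneg_of_mem_signedUnitVectors (hdiag : ∀ i, 0 ≤ A i i) {v : ι → 𝕜}
    (hv : v ∈ signedUnitVectors 𝕜 ι) : 0 ≤ A.toQuadraticForm' v := by
  obtain rfl | ⟨⟨j, ε⟩, rfl⟩ := hv
  · rw [QuadraticMap.map_zero]
  · have hsingle : A.toQuadraticForm' (Pi.single j (ε : 𝕜)) = A j j * (ε : 𝕜) * (ε : 𝕜) := by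
      simp [toQuadraticForm'_apply_eq_sum, Pi.single_apply]
    rw [hsingle, mul_assoc]
    exact mul_nonneg (hdiag j) (mul_self_nonneg _)

end Matrix

lemma exists_grid_vector_quadratic_form_ge_of_sum_abs_le_one {𝕜 ι : Type*} [Field 𝕜]
    [LinearOrder 𝕜] [IsStrictOrderedRing 𝕜] [Fintype ι] {A : Matrix ι ι 𝕜}
    (hdiag : ∀ i, 0 ≤ A i i) {m : ℕ} (hm : m ≠ 0) {t : ι → 𝕜} (ht : ∑ i, |t i| ≤ 1) :
    ∃ y : ι → 𝕜, (∀ i, ∃ z : ℤ, (m : 𝕜) * y i = z) ∧ ∑ i, |y i| ≤ 1 ∧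
      (1 - 1 / (m : 𝕜)) * ∑ i, ∑ j, A i j * t i * t j ≤ ∑ i, ∑ j, A i j * y i * y j := by
  classical
  obtain ⟨v, hv, hform⟩ := exists_map_inv_smul_sum_ge_of_mem_convexHull
    (fun v => toQuadraticForm'_nonneg_of_mem_signedUnitVectors hdiag)
    (convexHull_signedUnitVectors.ge ht) hm
  have hm₀ : (0 : 𝕜) < m := by positivity
  refine ⟨(m : 𝕜)⁻¹ • ∑ k, v k, fun i => ?_, ?_, ?_⟩
  · choose z hz using fun k => exists_intCast_eq_of_mem_signedUnitVectors (hv k)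
    exact ⟨∑ k, z k i, by simp [hz, hm₀.ne']⟩
  · have hsum : ∑ i, |(∑ k, v k) i| ≤ m := by
      simpa using sum_abs_sum_le_card fun k => sum_abs_le_one_of_mem_signedUnitVectors (hv k)
    simp_rw [Pi.smul_apply, smul_eq_mul, abs_mul, abs_inv, Nat.abs_cast, ← mul_sum]
    exact inv_mul_le_one_of_le₀ hsum hm₀.le
  · simpa only [toQuadraticForm'_apply_eq_sum] using hform

theorem exists_grid_vector_quadratic_form_ge_general {ι : Type*} [Fintype ι] (A : Matrix ι ι ℝ)
    (hdiag : ∀ i, 0 ≤ A i i) (m : ℕ) (hm : 1 ≤ m) :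
    ∃ y : ι → ℝ, (∀ i, ∃ z : ℤ, (m : ℝ) * y i = (z : ℝ)) ∧ (∑ i, |y i|) ≤ 1 ∧
      (1 - 1 / (m : ℝ)) *
        sSup {x : ℝ | ∃ t : ι → ℝ, (∑ k, |t k|) ≤ 1 ∧
          x = ∑ i, ∑ j, A i j * t i * t j} ≤
        ∑ i, ∑ j, A i j * y i * y j := by
  obtain ⟨t, ht, hmax⟩ := isCompact_sum_abs_le_one.exists_isMaxOn ⟨0, by simp⟩
    (f := fun t : ι → ℝ => ∑ i, ∑ j, A i j * t i * t j) (by fun_prop)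
  have hgreatest : IsGreatest {x : ℝ | ∃ t : ι → ℝ, (∑ k, |t k|) ≤ 1 ∧
      x = ∑ i, ∑ j, A i j * t i * t j} (∑ i, ∑ j, A i j * t i * t j) :=
    ⟨⟨t, ht, rfl⟩, by rintro x ⟨s, hs, rfl⟩; exact hmax hs⟩
  rw [hgreatest.csSup_eq]
  exact exists_grid_vector_quadratic_form_ge_of_sum_abs_le_one hdiag
    (Nat.one_le_iff_ne_zero.mp hm) ht

/-- Alon's grid approximation for the `L₁` Grothendieck problem: for a matrix `A` with
vanishing diagonal and any integer `m ≥ 1`, there is a vector `y` with entries in `(1/m)ℤ`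
and `ℓ₁` norm at most `1` whose quadratic form value is at least `(1 − 1/m) M₁(A)`. -/
theorem exists_grid_vector_quadratic_form_ge {n : ℕ} (A : Matrix (Fin n) (Fin n) ℝ)
    (hdiag : ∀ i, A i i = 0) (m : ℕ) (hm : 1 ≤ m) :
    ∃ y : Fin n → ℝ, (∀ i, ∃ z : ℤ, (m : ℝ) * y i = (z : ℝ)) ∧ (∑ i, |y i|) ≤ 1 ∧
      (1 - 1 / (m : ℝ)) *
        sSup {x : ℝ | ∃ t : Fin n → ℝ, (∑ k, |t k|) ≤ 1 ∧
          x = ∑ i, ∑ j, A i j * t i * t j} ≤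
        ∑ i, ∑ j, A i j * y i * y j :=
  exists_grid_vector_quadratic_form_ge_general A (fun i => (hdiag i).ge) m hm
end
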